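/- arXiv:2105.05422 — 9 statements merged into one kernel-verified Lean document; each statement's English description precedes it below -/
import Mathlib

section
/- Let f : A ⥤ B and g : B ⥤ C be functors between small categories with g a discrete opfibration. If the composite g ∘ f carries a lens structure δ, then there is a unique lens structure φ on f such that composing the lens (f, φ) with the unique lens structure on g (in the sense of lens composition) yields the lens (g ∘ f, δ). -/
open CategoryTheory

universe u

/-- A functor `F` is a discrete opfibration if for every object `a` of its domain and
every morphism `u : F.obj a ⟶ b` of its codomain, there exists a unique morphism `w`
with domain `a` such that `F.map w = u` (up to the identification of codomains). -/
def IsDiscreteOpfibration {A B : Type u} [SmallCategory A] [SmallCategory B]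
    (F : A ⥤ B) : Prop :=
  ∀ ⦃a : A⦄ ⦃b : B⦄ (u : F.obj a ⟶ b),
    ∃! w : Σ a' : A, a ⟶ a', ∃ h : F.obj w.1 = b, F.map w.2 = u ≫ eqToHom h.symm

/-- A (delta) lens between small categories: a functor together with a lifting
operation satisfying the three lens axioms. `lift u` packages the codomain
`a'` of the chosen lift together with the lift `a ⟶ a'` itself. -/
structure Lens (A B : Type u) [SmallCategory A] [SmallCategory B] where
  /-- the underlying (Get) functor -/
  func : A ⥤ B
  /-- the lifting (Put) operation -/
  lift : ∀ ⦃a : A⦄ ⦃b : B⦄, (func.obj a ⟶ b) → Σ a' : A, a ⟶ a'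
  /-- the codomain of the lift lies over the codomain of the lifted morphism -/
  lift_cod : ∀ ⦃a : A⦄ ⦃b : B⦄ (u : func.obj a ⟶ b), func.obj (lift u).1 = b
  /-- axiom (1): `f (φ (a, u)) = u` -/
  lift_map : ∀ ⦃a : A⦄ ⦃b : B⦄ (u : func.obj a ⟶ b),
      func.map (lift u).2 = u ≫ eqToHom (lift_cod u).symm
  /-- axiom (2): `φ (a, 1) = 1` -/
  lift_id : ∀ a : A, lift (𝟙 (func.obj a)) = ⟨a, 𝟙 a⟩
  /-- axiom (3): `φ (a, v ∘ u) = φ (a', v) ∘ φ (a, u)` -/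
  lift_comp : ∀ ⦃a : A⦄ ⦃b c : B⦄ (u : func.obj a ⟶ b) (v : b ⟶ c),
      lift (u ≫ v) = ⟨(lift (eqToHom (lift_cod u) ≫ v)).1,
        (lift u).2 ≫ (lift (eqToHom (lift_cod u) ≫ v)).2⟩

namespace Lens

variable {A B C : Type u} [SmallCategory A] [SmallCategory B] [SmallCategory C]

theorem lift_eqToHom (L : Lens A B) {a a' : A} (h : a' = a) {b : B}
    (u : L.func.obj a ⟶ b) (h' : L.func.obj a' = L.func.obj a) :
    L.lift (eqToHom h' ≫ u) = ⟨(L.lift u).1, eqToHom h ≫ (L.lift u).2⟩ := by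
  subst h; simp

/-- The identity lens on a small category. -/
def id (A : Type u) [SmallCategory A] : Lens A A where
  func := Functor.id A
  lift _ b u := ⟨b, u⟩
  lift_cod _ _ _ := rfl
  lift_map := by intros; simp
  lift_id := by intros; rfl
  lift_comp := by intros; simp

/-- Composition of lenses: `(L.comp M).lift u = L.lift ((M.lift u).2)`. -/
def comp (L : Lens A B) (M : Lens B C) : Lens A C where
  func := L.func ⋙ M.func
  lift _ _ u := L.lift (M.lift u).2
  lift_cod a c u := by
    show M.func.obj (L.func.obj _) = c
    rw [L.lift_cod]
    exact M.lift_cod u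
  lift_map a c u := by
    show M.func.map (L.func.map _) = _
    rw [L.lift_map, Functor.map_comp, M.lift_map, eqToHom_map]
    simp
  lift_id a := by
    show L.lift (M.lift (𝟙 (M.func.obj (L.func.obj a)))).2 = _
    rw [M.lift_id]
    exact L.lift_id a
  lift_comp a c c' u v := by
    show L.lift (M.lift (u ≫ v)).2 = _
    rw [M.lift_comp u v]
    show L.lift ((M.lift u).2 ≫ (M.lift (eqToHom (M.lift_cod u) ≫ v)).2) = _
    rw [L.lift_comp]
    have key : M.lift (eqToHom (show (L.func ⋙ M.func).obj (L.lift (M.lift u).2).1 = c by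
          show M.func.obj (L.func.obj _) = c; rw [L.lift_cod]; exact M.lift_cod u) ≫ v)
        = ⟨(M.lift (eqToHom (M.lift_cod u) ≫ v)).1,
            eqToHom (L.lift_cod (M.lift u).2) ≫ (M.lift (eqToHom (M.lift_cod u) ≫ v)).2⟩ := by
      rw [show (eqToHom (show (L.func ⋙ M.func).obj (L.lift (M.lift u).2).1 = c by
          show M.func.obj (L.func.obj _) = c; rw [L.lift_cod]; exact M.lift_cod u) ≫ v)
        = eqToHom (congrArg M.func.obj (L.lift_cod (M.lift u).2)) ≫ (eqToHom (M.lift_cod u) ≫ v) by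
          rw [← Category.assoc, eqToHom_trans]]
      exact M.lift_eqToHom (L.lift_cod (M.lift u).2) _ _
    beta_reduce
    rw [key]

/-- A lens is a monomorphism in the category of small categories and lenses if it is
left-cancellable with respect to lens composition. -/
def IsMono (f : Lens A B) : Prop :=
  ∀ ⦃D : Type u⦄ [SmallCategory D], ∀ x y : Lens D A, x.comp f = y.comp f → x = y

/-- A lens is an epimorphism in the category of small categories and lenses if it is
right-cancellable with respect to lens composition. -/
def IsEpi (f : Lens A B) : Prop :=
  ∀ ⦃C : Type u⦄ [SmallCategory C], ∀ x y : Lens B C, f.comp x = f.comp y → x = y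

end Lens

namespace IsDiscreteOpfibration

variable {A B : Type u} [SmallCategory A] [SmallCategory B]

/-- Two morphisms with the same domain and the same image under a discrete opfibration agree. -/
theorem sigma_eq_of_map_eq {F : A ⥤ B} (hF : IsDiscreteOpfibration F) {a b b' : A}
    (w : a ⟶ b') (u : a ⟶ b) (h : F.obj b' = F.obj b)
    (hw : F.map w = F.map u ≫ eqToHom h.symm) :
    (⟨b', w⟩ : Σ x : A, a ⟶ x) = ⟨b, u⟩ :=
  (hF (F.map u)).unique ⟨h, hw⟩ ⟨rfl, by simp⟩

/-- A lens structure on a discrete opfibration lifts the image of a morphism to that morphism. -/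
theorem lens_lift_map {γ : Lens A B} (hγ : IsDiscreteOpfibration γ.func) {a b : A} (u : a ⟶ b) :
    γ.lift (γ.func.map u) = ⟨b, u⟩ :=
  hγ.sigma_eq_of_map_eq _ u (γ.lift_cod _) (γ.lift_map _)

end IsDiscreteOpfibration

theorem CategoryTheory.eq_comp_eqToHom_of_sigma_eq {A : Type u} [SmallCategory A] {a b b' : A}
    {w : a ⟶ b'} {u : a ⟶ b} (h : (⟨b', w⟩ : Σ x : A, a ⟶ x) = ⟨b, u⟩) :
    w = u ≫ eqToHom (congrArg Sigma.fst h).symm := by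
  cases h
  simp

/-- If `g` is a discrete opfibration carrying the (unique) lens structure `γ`, and the
composite functor `f ⋙ g` carries a lens structure `δ`, then there is a unique lens
structure `φ` on `f` such that the lens composite of `(f, φ)` with `γ` is `δ`. -/
theorem exists_unique_lens_structure_of_comp {A B C : Type u}
    [SmallCategory A] [SmallCategory B] [SmallCategory C]
    (f : A ⥤ B) (g : B ⥤ C) (hg : IsDiscreteOpfibration g)
    (γ : Lens B C) (hγ : γ.func = g)
    (δ : Lens A C) (hδ : δ.func = f ⋙ g) :
    ∃! φ : Lens A B, φ.func = f ∧ φ.comp γ = δ := by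
  subst hγ
  obtain ⟨d, lift, lift_cod, lift_map, lift_id, lift_comp⟩ := δ
  dsimp only at hδ
  subst hδ
  have lift_sigma_eq : ∀ ⦃a : A⦄ ⦃b : B⦄ (u : f.obj a ⟶ b),
      (⟨f.obj (lift (γ.func.map u)).1, f.map (lift (γ.func.map u)).2⟩ : Σ x : B, f.obj a ⟶ x)
        = ⟨b, u⟩ := fun a b u =>
    hg.sigma_eq_of_map_eq _ u (lift_cod (a := a) (γ.func.map u)) (lift_map (a := a) (γ.func.map u))
  have lift_comp_eqToHom : ∀ ⦃a : A⦄ ⦃c c' : C⦄ (u : (f ⋙ γ.func).obj a ⟶ c) (h : c = c'),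
      lift (u ≫ eqToHom h) = lift u := by
    rintro a c _ u rfl
    simp
  let φ : Lens A B :=
    { func := f
      lift := fun a _ u => lift (a := a) (γ.func.map u)
      lift_cod := fun a b u => congrArg Sigma.fst (lift_sigma_eq u)
      lift_map := fun a b u => eq_comp_eqToHom_of_sigma_eq (lift_sigma_eq u)
      lift_id := fun a => by
        rw [γ.func.map_id]
        exact lift_id a
      lift_comp := fun a b c u v => by
        have hv : γ.func.map (eqToHom (congrArg Sigma.fst (lift_sigma_eq u)) ≫ v)
            = eqToHom (lift_cod (a := a) (γ.func.map u)) ≫ γ.func.map v := by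
          rw [γ.func.map_comp, eqToHom_map]
        rw [γ.func.map_comp u v, hv]
        exact lift_comp (a := a) (γ.func.map u) (γ.func.map v) }
  refine ⟨φ, ⟨rfl, ?_⟩, ?_⟩
  · have h : ∀ ⦃a : A⦄ ⦃c : C⦄ (u : (f ⋙ γ.func).obj a ⟶ c), (φ.comp γ).lift u = lift u :=
      fun a c u => by
        change lift (a := a) (γ.func.map (γ.lift u).2) = lift u
        rw [γ.lift_map]
        exact lift_comp_eqToHom u _
    unfold Lens.comp
    congr 1
    funext a c u
    exact h u
  · rintro ⟨f', lift', _, _, _, _⟩ ⟨hf, hcomp⟩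
    dsimp only at hf
    subst hf
    have hlift := eq_of_heq (Lens.mk.inj hcomp).2
    simp only [φ]
    congr 1
    funext a b u
    refine Eq.trans ?_ (congrFun (congrFun (congrFun hlift a) _) (γ.func.map u))
    change _ = lift' (γ.lift (γ.func.map u)).2
    rw [hg.lens_lift_map u]
end

section
/- Every lens (f, φ) : A ⇌ B between small categories may be represented as a commutative triangle of functors: there exist a small category X, a faithful bijective-on-objects functor p : X ⥤ A, and a discrete opfibration q : X ⥤ B such that f ∘ p = q. -/
open CategoryTheory

universe u

namespace Lens

variable {A B : Type u} [SmallCategory A] [SmallCategory B] (L : Lens A B)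

/-- The morphisms of the domain of a lens that are chosen lifts. -/
def chosenLifts : MorphismProperty A :=
  fun _ a' w => L.lift (L.func.map w) = ⟨a', w⟩

theorem lift_comp_of_lift_eq {a a' : A} {b c : B} {u : L.func.obj a ⟶ b} {w : a ⟶ a'}
    (hu : L.lift u = ⟨a', w⟩) (h : L.func.obj a' = b) (v : b ⟶ c) :
    L.lift (u ≫ v) = ⟨(L.lift (eqToHom h ≫ v)).1, w ≫ (L.lift (eqToHom h ≫ v)).2⟩ := by
  rw [L.lift_comp]
  generalize_proofs hcod
  revert hcod
  rw [hu]
  intro _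
  rfl

instance chosenLifts_isMultiplicative : L.chosenLifts.IsMultiplicative where
  id_mem a := by
    rw [chosenLifts, L.func.map_id]
    exact L.lift_id a
  comp_mem f g hf hg := by
    simp only [chosenLifts, Functor.map_comp] at hf hg ⊢
    rw [L.lift_comp_of_lift_eq hf rfl, eqToHom_refl, Category.id_comp, hg]

theorem lift_comp_eqToHom {a : A} {b b' : B} (u : L.func.obj a ⟶ b) (h : b = b') :
    L.lift (u ≫ eqToHom h) = L.lift u := by
  subst h
  simp

theorem lift_mem_chosenLifts {a : A} {b : B} (u : L.func.obj a ⟶ b) :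
    L.chosenLifts (L.lift u).2 := by
  rw [chosenLifts, L.lift_map, L.lift_comp_eqToHom]

/-- Restricted to the wide subcategory of chosen lifts, the functor of a lens is a discrete
opfibration. -/
theorem isDiscreteOpfibration_chosenLifts :
    IsDiscreteOpfibration (wideSubcategoryInclusion L.chosenLifts ⋙ L.func) := by
  intro a b u
  refine ⟨⟨⟨(L.lift u).1⟩, ⟨(L.lift u).2, L.lift_mem_chosenLifts u⟩⟩,
    ⟨L.lift_cod u, L.lift_map u⟩, ?_⟩
  rintro ⟨⟨a'⟩, ⟨w, hw⟩⟩ ⟨h, hu⟩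
  dsimp at w h
  subst h
  obtain rfl : L.func.map w = u := hu.trans (Category.comp_id u)
  have key : ∀ (s : Σ a' : A, a.obj ⟶ a') (hs : L.chosenLifts s.2), s = ⟨a', w⟩ →
      (⟨⟨a'⟩, ⟨w, hw⟩⟩ : Σ x : WideSubcategory L.chosenLifts, a ⟶ x) = ⟨⟨s.1⟩, ⟨s.2, hs⟩⟩ := by
    rintro s hs rfl
    rfl
  exact key _ _ hw

end Lens

/-- Every lens may be represented as a commutative triangle consisting of a faithful
bijective-on-objects functor followed by a discrete opfibration. -/
theorem lens_triangle_representation {A B : Type u} [SmallCategory A] [SmallCategory B]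
    (L : Lens A B) :
    ∃ (X : Cat.{u, u}) (p : X ⥤ A) (q : X ⥤ B),
      p.Faithful ∧ Function.Bijective p.obj ∧ IsDiscreteOpfibration q ∧ p ⋙ L.func = q := by
  exact ⟨Cat.of (WideSubcategory L.chosenLifts), wideSubcategoryInclusion L.chosenLifts,
    wideSubcategoryInclusion L.chosenLifts ⋙ L.func, wideSubcategory.faithful _,
    ⟨fun _ _ h => WideSubcategory.ext h, fun a => ⟨⟨a⟩, rfl⟩⟩,
    L.isDiscreteOpfibration_chosenLifts, rfl⟩
end

section
/- The coproduct category A + C of small categories A and C is a coproduct in the category of small categories and lenses: the coproduct injections ι_A : A ⥤ A + C and ι_C : C ⥤ A + C are discrete opfibrations (hence carry unique lens structures), and for every pair of lenses (f, φ) : A ⇌ B and (g, γ) : C ⇌ B there exists a unique lens (h, θ) : A + C ⇌ B whose composites with the injection lenses equal (f, φ) and (g, γ) respectively. -/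
open CategoryTheory

universe u

namespace Lens

variable {A B C : Type u} [SmallCategory A] [SmallCategory B] [SmallCategory C]

theorem ext_of_lift {L M : Lens A B} (hfunc : L.func = M.func)
    (hlift : ∀ ⦃a : A⦄ ⦃b : B⦄ (u : L.func.obj a ⟶ b),
      L.lift u = M.lift (eqToHom (by rw [hfunc]) ≫ u)) : L = M := by
  obtain ⟨F, l, _, _, _, _⟩ := L
  obtain ⟨G, m, _, _, _, _⟩ := M
  obtain rfl : F = G := hfunc
  obtain rfl : l = m := by
    funext a b u
    simpa using hlift u
  rfl

theorem lift_congr {L M : Lens A B} (h : L = M) {a : A} {b : B} (u : L.func.obj a ⟶ b) :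
    L.lift u = M.lift (eqToHom (by rw [h]) ≫ u) := by
  subst h
  simp

theorem isDiscreteOpfibration_inl : IsDiscreteOpfibration (Sum.inl_ A C) := by
  rintro a (b | b) u
  · refine ⟨⟨b, u.down⟩, ⟨rfl, (Category.comp_id u).symm⟩, ?_⟩
    rintro ⟨b', w⟩ ⟨h, hw⟩
    obtain rfl : b' = b := Sum.inl_injective h
    obtain rfl := hw.trans (Category.comp_id u)
    rfl
  · exact (hom_inl_inr_false A C u).elim

theorem isDiscreteOpfibration_inr : IsDiscreteOpfibration (Sum.inr_ A C) := by
  rintro a (b | b) u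
  · exact (hom_inr_inl_false C A u).elim
  · refine ⟨⟨b, u.down⟩, ⟨rfl, (Category.comp_id u).symm⟩, ?_⟩
    rintro ⟨b', w⟩ ⟨h, hw⟩
    obtain rfl : b' = b := Sum.inr_injective h
    obtain rfl := hw.trans (Category.comp_id u)
    rfl

/-- The action of a functor on morphisms out of a fixed object. -/
def mapOut (F : A ⥤ B) {a : A} (w : Σ a' : A, a ⟶ a') : Σ b : B, F.obj a ⟶ b :=
  ⟨F.obj w.1, F.map w.2⟩

theorem lift_func_map {L : Lens A B} (hL : IsDiscreteOpfibration L.func) {a a' : A}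
    (w : a ⟶ a') : L.lift (L.func.map w) = ⟨a', w⟩ :=
  (hL (L.func.map w)).unique ⟨L.lift_cod _, L.lift_map _⟩ ⟨rfl, by simp⟩

theorem mapOut_lift (L : Lens A B) {a : A} {b : B} (u : L.func.obj a ⟶ b) :
    mapOut L.func (L.lift u) = ⟨b, u⟩ :=
  Sigma.ext (L.lift_cod u) (by simp [mapOut, L.lift_map])

/-- Lifting along a lens out of the codomain of `ι` is determined by the composite lens. -/
theorem lift_eq_mapOut_comp (ι : Lens A B) (h : Lens B C) {a : A} {c : C}
    (u : h.func.obj (ι.func.obj a) ⟶ c) :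
    h.lift u = mapOut ι.func ((ι.comp h).lift (a := a) u) :=
  (mapOut_lift ι (h.lift u).2).symm

theorem lift_eq_of_comp_eq {ι : Lens A B} {h k : Lens B C} (hcomp : ι.comp h = ι.comp k)
    {a : A} {c : C} (u : h.func.obj (ι.func.obj a) ⟶ c) :
    h.lift u = k.lift
      (eqToHom (Functor.congr_obj (congrArg Lens.func hcomp) a).symm ≫ u) := by
  rw [lift_eq_mapOut_comp ι h, lift_eq_mapOut_comp ι k]
  exact congrArg (mapOut ι.func) (lift_congr hcomp u)

/-- The lens out of a coproduct category induced by lenses out of the summands. -/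
def coprod (f : Lens A B) (g : Lens C B) : Lens (A ⊕ C) B where
  func := f.func.sum' g.func
  lift
    | .inl a, _, u => mapOut (Sum.inl_ A C) (f.lift (a := a) u)
    | .inr c, _, u => mapOut (Sum.inr_ A C) (g.lift (a := c) u)
  lift_cod
    | .inl a, _, u => f.lift_cod (a := a) u
    | .inr c, _, u => g.lift_cod (a := c) u
  lift_map
    | .inl a, _, u => f.lift_map (a := a) u
    | .inr c, _, u => g.lift_map (a := c) u
  lift_id
    | .inl a => congrArg (mapOut (Sum.inl_ A C)) (f.lift_id a)
    | .inr c => congrArg (mapOut (Sum.inr_ A C)) (g.lift_id c)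
  lift_comp
    | .inl a, _, _, u, v => congrArg (mapOut (Sum.inl_ A C)) (f.lift_comp (a := a) u v)
    | .inr c, _, _, u, v => congrArg (mapOut (Sum.inr_ A C)) (g.lift_comp (a := c) u v)

theorem comp_coprod_of_func_eq_inl {ι : Lens A (A ⊕ C)} (hι : ι.func = Sum.inl_ A C)
    (f : Lens A B) (g : Lens C B) : ι.comp (coprod f g) = f := by
  have hop : IsDiscreteOpfibration ι.func := hι ▸ isDiscreteOpfibration_inl
  obtain ⟨F, l, lcod, lmap, lid, lcomp⟩ := ι
  obtain rfl : F = Sum.inl_ A C := hι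
  refine ext_of_lift rfl fun a b u => ?_
  exact (lift_func_map hop (f.lift (a := a) u).2).trans
    (congrArg (fun v : f.func.obj a ⟶ b => f.lift v) (Category.id_comp u).symm)

theorem comp_coprod_of_func_eq_inr {ι : Lens C (A ⊕ C)} (hι : ι.func = Sum.inr_ A C)
    (f : Lens A B) (g : Lens C B) : ι.comp (coprod f g) = g := by
  have hop : IsDiscreteOpfibration ι.func := hι ▸ isDiscreteOpfibration_inr
  obtain ⟨F, l, lcod, lmap, lid, lcomp⟩ := ι
  obtain rfl : F = Sum.inr_ A C := hι
  refine ext_of_lift rfl fun a b u => ?_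
  exact (lift_func_map hop (g.lift (a := a) u).2).trans
    (congrArg (fun v : g.func.obj a ⟶ b => g.lift v) (Category.id_comp u).symm)

theorem functor_sum_ext {F G : A ⊕ C ⥤ B} (hl : Sum.inl_ A C ⋙ F = Sum.inl_ A C ⋙ G)
    (hr : Sum.inr_ A C ⋙ F = Sum.inr_ A C ⋙ G) : F = G := by
  refine CategoryTheory.Functor.ext ?_ ?_
  · rintro (a | c)
    · exact Functor.congr_obj hl a
    · exact Functor.congr_obj hr c
  · rintro (x | x) (y | y) w
    · exact Functor.congr_hom hl w.down
    · exact (hom_inl_inr_false A C w).elim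
    · exact (hom_inr_inl_false C A w).elim
    · exact Functor.congr_hom hr w.down

/-- The injection lenses into a coproduct category are jointly epimorphic. -/
theorem sum_hom_ext {ιA : Lens A (A ⊕ C)} {ιC : Lens C (A ⊕ C)}
    (hA : ιA.func = Sum.inl_ A C) (hC : ιC.func = Sum.inr_ A C) {h k : Lens (A ⊕ C) B}
    (hl : ιA.comp h = ιA.comp k) (hr : ιC.comp h = ιC.comp k) : h = k := by
  have hfunc : h.func = k.func :=
    functor_sum_ext (hA ▸ congrArg Lens.func hl) (hC ▸ congrArg Lens.func hr)
  obtain ⟨F, l, lcod, lmap, lid, lcomp⟩ := ιA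
  obtain rfl : F = Sum.inl_ A C := hA
  obtain ⟨G, m, mcod, mmap, mid, mcomp⟩ := ιC
  obtain rfl : G = Sum.inr_ A C := hC
  refine ext_of_lift hfunc ?_
  rintro (a | c) b u
  · exact lift_eq_of_comp_eq hl (a := a) u
  · exact lift_eq_of_comp_eq hr (a := c) u

end Lens

/-- The coproduct of small categories is a coproduct in the category of small categories
and lenses: the injections are discrete opfibrations (hence carry unique lens
structures), and any pair of lenses out of the summands factors uniquely. -/
theorem lens_coproduct {A C B : Type u} [SmallCategory A] [SmallCategory C] [SmallCategory B] :
    IsDiscreteOpfibration (Sum.inl_ A C) ∧ IsDiscreteOpfibration (Sum.inr_ A C) ∧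
    ∀ (ιA : Lens A (A ⊕ C)) (ιC : Lens C (A ⊕ C)),
      ιA.func = Sum.inl_ A C → ιC.func = Sum.inr_ A C →
      ∀ (f : Lens A B) (g : Lens C B),
        ∃! h : Lens (A ⊕ C) B, ιA.comp h = f ∧ ιC.comp h = g := by
  refine ⟨Lens.isDiscreteOpfibration_inl, Lens.isDiscreteOpfibration_inr,
    fun ιA ιC hA hC f g => ?_⟩
  have hf := Lens.comp_coprod_of_func_eq_inl hA f g
  have hg := Lens.comp_coprod_of_func_eq_inr hC f g
  exact ⟨Lens.coprod f g, ⟨hf, hg⟩, fun k hk =>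
    Lens.sum_hom_ext hA hC (hk.1.trans hf.symm) (hk.2.trans hg.symm)⟩
end

section
/- The category of small categories and lenses has equalisers: for every parallel pair of lenses (f, φ), (g, γ) : A ⇌ B there exist a small category E and a lens (e, ε) : E ⇌ A such that the composites of (e, ε) with (f, φ) and with (g, γ) are equal as lenses, and for every lens (h, θ) : D ⇌ A whose composites with (f, φ) and (g, γ) are equal as lenses, there exists a unique lens (k, κ) : D ⇌ E whose composite with (e, ε) equals (h, θ). -/
open CategoryTheory

universe u

namespace Lens

variable {A B D : Type u} [SmallCategory A] [SmallCategory B] [SmallCategory D]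

theorem ext_of_heq {L M : Lens A B} (hobj : ∀ a, L.func.obj a = M.func.obj a)
    (hmap : ∀ ⦃a a' : A⦄ (w : a ⟶ a'), L.func.map w ≍ M.func.map w)
    (hlift : ∀ ⦃a : A⦄ ⦃b : B⦄ (u : L.func.obj a ⟶ b) (v : M.func.obj a ⟶ b),
      u ≍ v → L.lift u = M.lift v) : L = M := by
  obtain ⟨F, l, _, _, _, _⟩ := L
  obtain ⟨G, m, _, _, _, _⟩ := M
  obtain rfl : F = G := Functor.hext hobj fun _ _ w => hmap w
  obtain rfl : l = m := by
    funext a b u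
    exact hlift u u HEq.rfl
  rfl

/-- The image of the lift of `u`, together with its codomain, is `u`. -/
theorem sigma_map_lift (L : Lens A B) {a : A} {b : B} (u : L.func.obj a ⟶ b) :
    (⟨L.func.obj (L.lift u).1, L.func.map (L.lift u).2⟩ : Σ b', L.func.obj a ⟶ b') = ⟨b, u⟩ := by
  refine Sigma.ext (L.lift_cod u) ?_
  rw [L.lift_map]
  exact comp_eqToHom_heq _ _

/-- Two lenses agree at an object `a` if their functors agree on `a` and on the morphisms out
of `a`, and their liftings agree at `a`. -/
def AgreesAt (f g : Lens A B) (a : A) : Prop :=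
  f.func.obj a = g.func.obj a ∧
  (∀ w : Σ a', a ⟶ a', f.func.map w.2 ≍ g.func.map w.2) ∧
  ∀ ⦃b : B⦄ (u : f.func.obj a ⟶ b) (v : g.func.obj a ⟶ b), u ≍ v → f.lift u = g.lift v

theorem agreesAt_of_eq {f g : Lens A B} (h : f = g) (a : A) : AgreesAt f g a := by
  subst h
  refine ⟨rfl, fun _ => HEq.rfl, fun b u v huv => ?_⟩
  rw [eq_of_heq huv]

theorem agreesAt_obj_of_comp_eq {f g : Lens A B} {h : Lens D A} (hfg : h.comp f = h.comp g)
    (d : D) : AgreesAt f g (h.func.obj d) := by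
  obtain ⟨hobj, hmap, hlift⟩ := agreesAt_of_eq hfg d
  refine ⟨hobj, fun ⟨a', w⟩ => ?_, fun b u v huv => ?_⟩
  · rw [← h.sigma_map_lift w]
    exact hmap (h.lift w)
  · have key : h.lift (f.lift u).2 = h.lift (g.lift v).2 := hlift u v huv
    have := congrArg (fun x : Σ d', d ⟶ d' =>
      (⟨h.func.obj x.1, h.func.map x.2⟩ : Σ a', h.func.obj d ⟶ a')) key
    exact (h.sigma_map_lift _).symm.trans (this.trans (h.sigma_map_lift _))

/-- The objects all of whose successors are objects at which `f` and `g` agree. -/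
def equaliserProperty (f g : Lens A B) : ObjectProperty A :=
  fun a => ∀ ⦃a' : A⦄, (a ⟶ a') → AgreesAt f g a'

theorem equaliserProperty_of_hom {f g : Lens A B} ⦃a a' : A⦄ (w : a ⟶ a')
    (ha : equaliserProperty f g a) : equaliserProperty f g a' :=
  fun _ w' => ha (w ≫ w')

theorem equaliserProperty_obj {f g : Lens A B} {h : Lens D A} (hfg : h.comp f = h.comp g)
    (d : D) : equaliserProperty f g (h.func.obj d) := by
  intro a' w
  rw [← h.lift_cod w]
  exact agreesAt_obj_of_comp_eq hfg _

section Cosieve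

variable {P : ObjectProperty A} (hP : ∀ ⦃a a' : A⦄, (a ⟶ a') → P a → P a')

/-- The inclusion of a full subcategory closed under outgoing morphisms, as a lens. -/
def cosieveInclusion : Lens P.FullSubcategory A where
  func := P.ι
  lift a b u := ⟨⟨b, hP u a.property⟩, ObjectProperty.homMk u⟩
  lift_cod _ _ _ := rfl
  lift_map a b u := (Category.comp_id u).symm
  lift_id _ := rfl
  lift_comp a b c u v := by
    simp only [eqToHom_refl, Category.id_comp]
    rfl

/-- The factorisation of a lens through a full subcategory containing its image. -/
def cosieveFactor (h : Lens D A) (hh : ∀ d, P (h.func.obj d)) : Lens D P.FullSubcategory where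
  func := P.lift h.func hh
  lift _ _ u := h.lift u.hom
  lift_cod _ _ u := ObjectProperty.FullSubcategory.ext (h.lift_cod u.hom)
  lift_map _ _ u := by
    apply P.ι.map_injective
    rw [Functor.map_comp, eqToHom_map]
    exact h.lift_map u.hom
  lift_id d := h.lift_id d
  lift_comp d b c u v := by
    have key : ∀ p : (P.lift h.func hh).obj (h.lift u.hom).1 = b,
        (eqToHom p ≫ v).hom = eqToHom (h.lift_cod u.hom) ≫ v.hom := fun p => by
      change P.ι.map (eqToHom p ≫ v) = _
      rw [Functor.map_comp, eqToHom_map]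
      rfl
    rw [key]
    exact h.lift_comp u.hom v.hom

theorem existsUnique_comp_cosieveInclusion (h : Lens D A) (hh : ∀ d, P (h.func.obj d)) :
    ∃! k : Lens D P.FullSubcategory, k.comp (cosieveInclusion hP) = h := by
  refine ⟨cosieveFactor h hh, rfl, ?_⟩
  rintro k rfl
  refine ext_of_heq (fun _ => rfl) (fun _ _ _ => HEq.rfl) fun d b u v huv => ?_
  obtain rfl := eq_of_heq huv
  rfl

end Cosieve

theorem cosieveInclusion_comp_eq (f g : Lens A B) :
    (cosieveInclusion (equaliserProperty_of_hom (f := f) (g := g))).comp f =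
      (cosieveInclusion equaliserProperty_of_hom).comp g := by
  refine ext_of_heq (fun a => (a.property (𝟙 _)).1)
    (fun a a' w => (a.property (𝟙 _)).2.1 ⟨a'.obj, w.hom⟩) fun a b u v huv => ?_
  have key : f.lift u = g.lift v := (a.property (𝟙 _)).2.2 u v huv
  change (cosieveInclusion equaliserProperty_of_hom).lift (a := a) (f.lift u).2 =
    (cosieveInclusion equaliserProperty_of_hom).lift (a := a) (g.lift v).2
  rw [key]

end Lens

/-- The category of small categories and lenses has equalisers. -/
theorem lens_equalisers {A B : Type u} [SmallCategory A] [SmallCategory B]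
    (f g : Lens A B) :
    ∃ (E : Cat.{u, u}) (e : Lens E A),
      e.comp f = e.comp g ∧
      ∀ (D : Type u) [SmallCategory D] (h : Lens D A),
        h.comp f = h.comp g → ∃! k : Lens D E, k.comp e = h :=
  ⟨Cat.of (Lens.equaliserProperty f g).FullSubcategory,
    Lens.cosieveInclusion Lens.equaliserProperty_of_hom,
    Lens.cosieveInclusion_comp_eq f g,
    fun _ _ h hfg => Lens.existsUnique_comp_cosieveInclusion _ h (Lens.equaliserProperty_obj hfg)⟩
end

section
/- If a lens (g, γ) : B ⇌ C has underlying functor g an injective-on-objects discrete opfibration, then it is a monomorphism in the category of small categories and lenses: for any lenses (f, φ), (f', φ') : A ⇌ B, if the composite of (f, φ) with (g, γ) equals the composite of (f', φ') with (g, γ) as lenses, then (f, φ) = (f', φ'). -/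
open CategoryTheory

universe u

namespace IsDiscreteOpfibration

variable {A B : Type u} [SmallCategory A] [SmallCategory B] {F : A ⥤ B}

theorem faithful (hF : IsDiscreteOpfibration F) : F.Faithful where
  map_injective {a a'} w w' h := by
    have := (hF (F.map w')).unique (y₁ := ⟨a', w⟩) (y₂ := ⟨a', w'⟩)
      ⟨rfl, by simp [h]⟩ ⟨rfl, by simp⟩
    simpa using this

end IsDiscreteOpfibration

/-- A functor that is faithful and injective on objects is left-cancellable, up to equality. -/
theorem CategoryTheory.Functor.eq_of_comp_eq_comp_of_injective_obj
    {A B C : Type u} [SmallCategory A] [SmallCategory B] [SmallCategory C]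
    {F F' : A ⥤ B} {G : B ⥤ C} [G.Faithful] (hG : Function.Injective G.obj)
    (h : F ⋙ G = F' ⋙ G) : F = F' := by
  refine Functor.ext (fun a => hG (Functor.congr_obj h a)) fun a a' m => G.map_injective ?_
  simpa [eqToHom_map] using Functor.congr_hom h m

namespace Lens

variable {A B C : Type u} [SmallCategory A] [SmallCategory B] [SmallCategory C]

/-- Over a discrete opfibration, the chosen lift of an image is the original morphism. -/
theorem lift_map_of_isDiscreteOpfibration (g : Lens B C) (hg : IsDiscreteOpfibration g.func)
    {b b' : B} (u : b ⟶ b') : g.lift (g.func.map u) = ⟨b', u⟩ :=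
  (hg (g.func.map u)).unique ⟨g.lift_cod _, g.lift_map _⟩ ⟨rfl, by simp⟩

end Lens

/-- A lens whose underlying functor is an injective-on-objects discrete opfibration is a
monomorphism in the category of small categories and lenses. -/
theorem lens_mono_of_injective_dopf {B C : Type u} [SmallCategory B] [SmallCategory C]
    (g : Lens B C) (hinj : Function.Injective g.func.obj)
    (hdopf : IsDiscreteOpfibration g.func) :
    ∀ ⦃A : Type u⦄ [SmallCategory A],
      ∀ f f' : Lens A B, f.comp g = f'.comp g → f = f' := by
  intro A _ f f' h
  have := hdopf.faithful
  have hfunc : f.func = f'.func :=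
    Functor.eq_of_comp_eq_comp_of_injective_obj hinj (congrArg Lens.func h)
  obtain ⟨F, φ, _, _, _, _⟩ := f
  obtain ⟨F', φ', _, _, _, _⟩ := f'
  obtain rfl : F = F' := hfunc
  simp only [Lens.comp, Lens.mk.injEq, heq_eq_eq, true_and] at h ⊢
  funext a b u
  have hlift : φ (g.lift (g.func.map u)).2 = φ' (g.lift (g.func.map u)).2 :=
    congrFun (congrFun (congrFun h a) (g.func.obj b)) (g.func.map u)
  rwa [g.lift_map_of_isDiscreteOpfibration hdopf] at hlift
end

section
/- If a lens (f, φ) : A ⇌ B has underlying functor f surjective on objects, then f is also surjective on morphisms, and the lens is an epimorphism in the category of small categories and lenses: for any lenses (g, γ), (g', γ') : B ⇌ C, if the composite of (f, φ) with (g, γ) equals the composite of (f, φ) with (g', γ') as lenses, then (g, γ) = (g', γ'). -/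
open CategoryTheory

universe u

namespace Lens

variable {A B C : Type u} [SmallCategory A] [SmallCategory B] [SmallCategory C]

theorem ext_of_func_lift {x y : Lens A B} (hfunc : x.func = y.func)
    (hlift : HEq x.lift y.lift) : x = y := by
  cases x; cases y; cases hfunc; cases hlift; rfl

theorem heq_lift {x y : Lens A B} (h : x = y) : HEq x.lift y.lift := by
  subst h; rfl

/-- The image of the chosen lift of `u` is `u`, as a morphism with unspecified codomain. -/
theorem map_lift_sigma (L : Lens A B) {a : A} {b : B} (u : L.func.obj a ⟶ b) :
    (⟨L.func.obj (L.lift u).1, L.func.map (L.lift u).2⟩ : Σ b' : B, L.func.obj a ⟶ b') =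
      ⟨b, u⟩ := by
  rw [L.lift_map]
  generalize_proofs h
  generalize L.func.obj (L.lift u).1 = b' at h
  subst h
  simp

theorem lift_sigma_injective (L : Lens A B) {a : A} {s t : Σ b : B, L.func.obj a ⟶ b}
    (h : L.lift s.2 = L.lift t.2) : s = t := by
  rw [← Sigma.eta s, ← Sigma.eta t, ← L.map_lift_sigma s.2, ← L.map_lift_sigma t.2, h]

theorem exists_map_eq_of_surjective (L : Lens A B) (hsurj : Function.Surjective L.func.obj)
    {b b' : B} (v : b ⟶ b') :
    ∃ (a a' : A) (u : a ⟶ a') (h : L.func.obj a = b) (h' : L.func.obj a' = b'),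
      L.func.map u = eqToHom h ≫ v ≫ eqToHom h'.symm := by
  obtain ⟨a, rfl⟩ := hsurj b
  exact ⟨a, _, (L.lift v).2, rfl, L.lift_cod v, by simp [L.lift_map]⟩

theorem func_cancel_of_surjective (L : Lens A B) (hsurj : Function.Surjective L.func.obj)
    {F G : B ⥤ C} (h : L.func ⋙ F = L.func ⋙ G) : F = G := by
  refine CategoryTheory.Functor.ext (fun b => ?_) fun b b' v => ?_
  · obtain ⟨a, rfl⟩ := hsurj b
    exact Functor.congr_obj h a
  · obtain ⟨a, a', u, rfl, rfl, hu⟩ := L.exists_map_eq_of_surjective hsurj v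
    obtain rfl : L.func.map u = v := by simpa using hu
    exact Functor.congr_hom h u

theorem isEpi_of_surjective (L : Lens A B) (hsurj : Function.Surjective L.func.obj) :
    L.IsEpi := by
  intro C _ x y h
  have hfunc : x.func = y.func := L.func_cancel_of_surjective hsurj (congrArg Lens.func h)
  refine ext_of_func_lift hfunc ?_
  have hlift := heq_lift h
  obtain ⟨F, l, _, _, _, _⟩ := x
  obtain ⟨G, m, _, _, _, _⟩ := y
  obtain rfl : F = G := hfunc
  refine heq_of_eq ?_
  funext b c u
  obtain ⟨a, rfl⟩ := hsurj b
  exact L.lift_sigma_injective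
    (congrFun (congrFun (congrFun (eq_of_heq hlift) a) c) u)

end Lens

/-- If the underlying functor of a lens is surjective on objects, then it is surjective
on morphisms, and the lens is an epimorphism in the category of small categories and
lenses. -/
theorem lens_epi_of_surjective {A B : Type u} [SmallCategory A] [SmallCategory B]
    (f : Lens A B) (hsurj : Function.Surjective f.func.obj) :
    (∀ ⦃b b' : B⦄ (v : b ⟶ b'), ∃ (a a' : A) (u : a ⟶ a') (h : f.func.obj a = b)
        (h' : f.func.obj a' = b'), f.func.map u = eqToHom h ≫ v ≫ eqToHom h'.symm) ∧
    f.IsEpi :=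
  ⟨fun _ _ v => f.exists_map_eq_of_surjective hsurj v, f.isEpi_of_surjective hsurj⟩
end

section
/- If a lens (f, φ) : A ⇌ B has underlying functor f an epimorphism in the category Cat of small categories and functors, then the lens is an epimorphism in the category of small categories and lenses: for any lenses (g, γ), (g', γ') : B ⇌ C, if the composite of (f, φ) with (g, γ) equals the composite of (f, φ) with (g', γ') as lenses, then (g, γ) = (g', γ'). -/
open CategoryTheory

universe u

/-- The indiscrete category on a type: exactly one morphism between any two objects. -/
def Indiscrete (X : Type u) : Type u := X

namespace Indiscrete

instance (X : Type u) : SmallCategory (Indiscrete X) where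
  Hom _ _ := PUnit
  id _ := PUnit.unit
  comp _ _ := PUnit.unit

/-- Every function into the objects of an indiscrete category extends to a functor. -/
def functor {B : Type u} [SmallCategory B] {X : Type u} (p : B → X) : B ⥤ Indiscrete X where
  obj := p
  map _ := PUnit.unit

end Indiscrete

/-- An epimorphism in the category of small categories is surjective on objects. -/
theorem CategoryTheory.Functor.obj_surjective_of_cancel {A B : Type u}
    [SmallCategory A] [SmallCategory B] (F : A ⥤ B)
    (hepi : ∀ ⦃C : Type u⦄ [SmallCategory C], ∀ k k' : B ⥤ C, F ⋙ k = F ⋙ k' → k = k') :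
    Function.Surjective F.obj := by
  intro b
  let k : B ⥤ Indiscrete (ULift.{u} Prop) := Indiscrete.functor fun b => ⟨∃ a, F.obj a = b⟩
  let k' : B ⥤ Indiscrete (ULift.{u} Prop) := Indiscrete.functor fun _ => ⟨True⟩
  have hk : F ⋙ k = F ⋙ k' := by
    refine CategoryTheory.Functor.ext (fun a => ?_) (fun _ _ _ => rfl)
    exact congrArg ULift.up (eq_true ⟨a, rfl⟩)
  have hb : k.obj b = k'.obj b := by rw [hepi k k' hk]
  exact of_eq_true (congrArg ULift.down hb)

/-- Applying the underlying functor to a lift recovers the lifted morphism, codomain included. -/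
theorem Lens.map_lift {A B : Type u} [SmallCategory A] [SmallCategory B] (L : Lens A B)
    {a : A} {b : B} (u : L.func.obj a ⟶ b) :
    (⟨L.func.obj (L.lift u).1, L.func.map (L.lift u).2⟩ : Σ b' : B, L.func.obj a ⟶ b') =
      ⟨b, u⟩ := by
  rw [L.lift_map]
  generalize_proofs h
  generalize L.func.obj (L.lift u).1 = b' at h
  subst h
  simp

/-- If the underlying functor of a lens is an epimorphism in the category `Cat` of small
categories and functors, then the lens is an epimorphism in the category of small
categories and lenses. -/
theorem lens_epi_of_cat_epi {A B : Type u} [SmallCategory A] [SmallCategory B]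
    (f : Lens A B)
    (hepi : ∀ ⦃C : Type u⦄ [SmallCategory C],
      ∀ k k' : B ⥤ C, f.func ⋙ k = f.func ⋙ k' → k = k') :
    f.IsEpi := by
  intro C _ x y h
  have hfunc : x.func = y.func := hepi _ _ (congrArg Lens.func h)
  obtain ⟨k, lx, _, _, _, _⟩ := x
  obtain ⟨k', ly, _, _, _, _⟩ := y
  obtain rfl : k = k' := hfunc
  obtain rfl : lx = ly := by
    funext b c u
    obtain ⟨a, rfl⟩ := f.func.obj_surjective_of_cancel hepi b
    have hlift : f.lift (lx u).2 = f.lift (ly u).2 := by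
      simp only [Lens.comp, Lens.mk.injEq, heq_eq_eq, true_and] at h
      exact congrFun (congrFun (congrFun h a) c) u
    have hx := f.map_lift (lx u).2
    rw [hlift] at hx
    exact hx.symm.trans (f.map_lift (ly u).2)
  rfl
end

section
/- Every lens (f, φ) : A ⇌ B factors as a surjective-on-objects lens followed by a cosieve: there exist a small category I, a lens (e, ε) : A ⇌ I with e surjective on objects, and a lens (m, μ) : I ⇌ B with m an injective-on-objects discrete opfibration, such that the composite of (e, ε) followed by (m, μ) equals (f, φ) as lenses. -/
open CategoryTheory

universe u

namespace CategoryTheory.ObjectProperty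

variable {B : Type u} [SmallCategory B] {P : ObjectProperty B}

/-- The inclusion of a full subcategory on an upward closed class of objects, as a lens. -/
def inclusionLens (hP : ∀ ⦃b c : B⦄, (b ⟶ c) → P b → P c) : Lens P.FullSubcategory B where
  func := P.ι
  lift x b u := ⟨⟨b, hP u x.property⟩, homMk u⟩
  lift_cod _ _ _ := rfl
  lift_map := by intros; simp
  lift_id _ := rfl
  lift_comp x b c u v := by
    simp only [eqToHom_refl, Category.id_comp]
    rfl

theorem ι_obj_injective (P : ObjectProperty B) : Function.Injective P.ι.obj :=
  fun _ _ h => FullSubcategory.ext h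

theorem isDiscreteOpfibration_ι (hP : ∀ ⦃b c : B⦄, (b ⟶ c) → P b → P c) :
    IsDiscreteOpfibration P.ι := by
  intro x b u
  refine ⟨⟨⟨b, hP u x.property⟩, homMk u⟩, ⟨rfl, by simp⟩, ?_⟩
  rintro ⟨y, w⟩ ⟨rfl, hw⟩
  have hw' : w = homMk u := hom_ext P (by simpa using hw)
  rw [hw']
  rfl

end CategoryTheory.ObjectProperty

namespace Lens

variable {A B : Type u} [SmallCategory A] [SmallCategory B] (f : Lens A B)

/-- The objects of `B` in the image of the underlying functor of a lens. -/
def image : ObjectProperty B := fun b => ∃ a, f.func.obj a = b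

/-- The image of a lens is upward closed, because morphisms out of it can be lifted. -/
theorem image_of_hom ⦃b c : B⦄ (u : b ⟶ c) (hb : f.image b) : f.image c := by
  obtain ⟨a, rfl⟩ := hb
  exact ⟨_, f.lift_cod u⟩

/-- The corestriction of a lens to the full subcategory on its image. -/
def toImage : Lens A f.image.FullSubcategory where
  func := f.image.lift f.func fun a => ⟨a, rfl⟩
  lift _ _ u := f.lift u.hom
  lift_cod _ _ u := ObjectProperty.FullSubcategory.ext (f.lift_cod u.hom)
  lift_map a b u := by
    apply ObjectProperty.hom_ext
    rw [ObjectProperty.FullSubcategory.comp_hom, ObjectProperty.eqToHom_hom]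
    exact f.lift_map u.hom
  lift_id a := f.lift_id a
  lift_comp a b c u v := by
    have key {x : f.image.FullSubcategory} (h : x = b) :
        (eqToHom h ≫ v).hom = eqToHom (congrArg ObjectProperty.FullSubcategory.obj h) ≫ v.hom := by
      rw [ObjectProperty.FullSubcategory.comp_hom, ObjectProperty.eqToHom_hom]
    rw [key]
    exact f.lift_comp u.hom v.hom

theorem toImage_obj_surjective : Function.Surjective f.toImage.func.obj := by
  rintro ⟨_, a, rfl⟩
  exact ⟨a, rfl⟩

theorem toImage_comp_inclusionLens :
    f.toImage.comp (ObjectProperty.inclusionLens f.image_of_hom) = f :=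
  rfl

end Lens

/-- Every lens factors as a surjective-on-objects lens (an epimorphism) followed by a
cosieve, i.e. a lens whose underlying functor is an injective-on-objects discrete
opfibration (a monomorphism). -/
theorem lens_factorisation {A B : Type u} [SmallCategory A] [SmallCategory B]
    (f : Lens A B) :
    ∃ (I : Cat.{u, u}) (e : Lens A I) (m : Lens I B),
      Function.Surjective e.func.obj ∧
      Function.Injective m.func.obj ∧ IsDiscreteOpfibration m.func ∧
      e.comp m = f := by
  exact ⟨Cat.of f.image.FullSubcategory, f.toImage, ObjectProperty.inclusionLens f.image_of_hom,
    f.toImage_obj_surjective, f.image.ι_obj_injective,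
    ObjectProperty.isDiscreteOpfibration_ι f.image_of_hom, f.toImage_comp_inclusionLens⟩
end

section
/- Given lenses (f, φ) : A ⇌ B and (g, γ) : C ⇌ B, let A ×_B C denote the strict pullback category whose objects are pairs (a, c) with f(a) = g(c) and whose morphisms (a, c) ⟶ (a', c') are pairs (u : a ⟶ a', v : c ⟶ c') with f(u) = g(v). Then the projection π₀ : A ×_B C ⥤ A admits the lens structure with lifting ((a, c), u : a ⟶ a') ↦ (u, γ(c, f(u))), the projection π₁ : A ×_B C ⥤ C admits the lens structure with lifting ((a, c), v : c ⟶ c') ↦ (φ(a, g(v)), v), and the composite of the π₀ lens with (f, φ) equals the composite of the π₁ lens with (g, γ) as lenses. -/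
open CategoryTheory

universe u

/-- The strict pullback category of two functors: objects are pairs `(a, c)` with
`f.obj a = g.obj c`, morphisms are pairs `(u, v)` with `f.map u = g.map v`
(modulo the identification of endpoints). -/
def CatPullback {A B C : Type u} [SmallCategory A] [SmallCategory B] [SmallCategory C]
    (f : A ⥤ B) (g : C ⥤ B) : Type u :=
  { p : A × C // f.obj p.1 = g.obj p.2 }

namespace CatPullback

variable {A B C : Type u} [SmallCategory A] [SmallCategory B] [SmallCategory C]
  {f : A ⥤ B} {g : C ⥤ B}

instance : SmallCategory (CatPullback f g) where
  Hom x y := { m : (x.1.1 ⟶ y.1.1) × (x.1.2 ⟶ y.1.2) //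
      f.map m.1 ≫ eqToHom y.2 = eqToHom x.2 ≫ g.map m.2 }
  id x := ⟨(𝟙 _, 𝟙 _), by simp⟩
  comp m n := ⟨(m.1.1 ≫ n.1.1, m.1.2 ≫ n.1.2), by
    rw [Functor.map_comp, Functor.map_comp, Category.assoc, n.2, ← Category.assoc, m.2,
      Category.assoc]⟩
  id_comp m := by apply Subtype.ext; simp
  comp_id m := by apply Subtype.ext; simp
  assoc m n k := by apply Subtype.ext; simp

/-- The first projection functor of the strict pullback. -/
def proj₁ : CatPullback f g ⥤ A where
  obj x := x.1.1
  map m := m.1.1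

/-- The second projection functor of the strict pullback. -/
def proj₂ : CatPullback f g ⥤ C where
  obj x := x.1.2
  map m := m.1.2

end CatPullback

/-- Lifting is insensitive to transporting the codomain along an equality. -/
theorem Lens.lift_comp_eqToHom_s18 {A B : Type u} [SmallCategory A] [SmallCategory B]
    (L : Lens A B) {a : A} {b b' : B} (u : L.func.obj a ⟶ b) (h : b = b') :
    L.lift (u ≫ eqToHom h) = L.lift u := by
  subst h; simp

theorem Lens.ext_of_lift_s18 {A B : Type u} [SmallCategory A] [SmallCategory B]
    {L M : Lens A B} (h : L.func = M.func)
    (hlift : ∀ (a : A) (b : B) (u : M.func.obj a ⟶ b),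
      L.lift (eqToHom (Functor.congr_obj h a) ≫ u) = M.lift u) : L = M := by
  obtain ⟨f, l, _, _, _, _⟩ := L
  obtain ⟨g, m, _, _, _, _⟩ := M
  obtain rfl : f = g := h
  obtain rfl : l = m := by
    funext a b u
    simpa using hlift a b u
  rfl

namespace CatPullback

variable {A B C : Type u} [SmallCategory A] [SmallCategory B] [SmallCategory C]

/-- Two morphisms out of an object of the strict pullback, with possibly different codomains,
agree as soon as both of their components do. -/
theorem sigma_hom_ext {f : A ⥤ B} {g : C ⥤ B} {x : CatPullback f g}
    {s t : Σ y : CatPullback f g, x ⟶ y}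
    (h₁ : (⟨s.1.1.1, s.2.1.1⟩ : Σ a : A, x.1.1 ⟶ a) = ⟨t.1.1.1, t.2.1.1⟩)
    (h₂ : (⟨s.1.1.2, s.2.1.2⟩ : Σ c : C, x.1.2 ⟶ c) = ⟨t.1.1.2, t.2.1.2⟩) : s = t := by
  obtain ⟨⟨⟨a, c⟩, p⟩, ⟨⟨u, v⟩, q⟩⟩ := s
  obtain ⟨⟨⟨a', c'⟩, p'⟩, ⟨⟨u', v'⟩, q'⟩⟩ := t
  cases h₁
  cases h₂
  rfl

/-- The lens structure on the first projection of the strict pullback along a lens. -/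
def lens₁ (f : A ⥤ B) (G : Lens C B) : Lens (CatPullback f G.func) A where
  func := proj₁
  lift x a' u :=
    ⟨⟨(a', (G.lift (eqToHom x.2.symm ≫ f.map u)).1),
        (G.lift_cod (eqToHom x.2.symm ≫ f.map u)).symm⟩,
      ⟨(u, (G.lift (eqToHom x.2.symm ≫ f.map u)).2), by rw [G.lift_map]; simp⟩⟩
  lift_cod _ _ _ := rfl
  lift_map _ _ u := by exact (Category.comp_id u).symm
  lift_id x := by
    refine sigma_hom_ext rfl ?_
    have h : eqToHom x.2.symm ≫ f.map (𝟙 x.1.1) ≫ eqToHom x.2 = 𝟙 (G.func.obj x.1.2) := by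
      simp
    have := G.lift_comp_eqToHom_s18 (eqToHom x.2.symm ≫ f.map (𝟙 x.1.1)) x.2
    rw [Category.assoc, h, G.lift_id] at this
    exact this.symm
  lift_comp x a a' u v := by
    change x.1.1 ⟶ a at u
    refine sigma_hom_ext ?_ ?_
    · exact congrArg (Sigma.mk a') (congrArg (u ≫ ·) (Category.id_comp v).symm)
    · have h := G.lift_comp (eqToHom x.2.symm ≫ f.map u) (f.map v)
      rw [Category.assoc, ← f.map_comp] at h
      exact h.trans (congrArg (fun w : a ⟶ a' =>
        (⟨_, _ ≫ (G.lift (eqToHom (G.lift_cod _) ≫ f.map w)).2⟩ : Σ c : C, x.1.2 ⟶ c))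
        (Category.id_comp v).symm)

/-- The lens structure on the second projection of the strict pullback along a lens. -/
def lens₂ (F : Lens A B) (g : C ⥤ B) : Lens (CatPullback F.func g) C where
  func := proj₂
  lift x c' v :=
    ⟨⟨((F.lift (eqToHom x.2 ≫ g.map v)).1, c'), F.lift_cod (eqToHom x.2 ≫ g.map v)⟩,
      ⟨((F.lift (eqToHom x.2 ≫ g.map v)).2, v), by rw [F.lift_map]; simp⟩⟩
  lift_cod _ _ _ := rfl
  lift_map _ _ v := by exact (Category.comp_id v).symm
  lift_id x := by
    refine sigma_hom_ext ?_ rfl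
    have h : eqToHom x.2 ≫ g.map (𝟙 x.1.2) ≫ eqToHom x.2.symm = 𝟙 (F.func.obj x.1.1) := by
      simp
    have := F.lift_comp_eqToHom_s18 (eqToHom x.2 ≫ g.map (𝟙 x.1.2)) x.2.symm
    rw [Category.assoc, h, F.lift_id] at this
    exact this.symm
  lift_comp x c c' u v := by
    change x.1.2 ⟶ c at u
    refine sigma_hom_ext ?_ ?_
    · have h := F.lift_comp (eqToHom x.2 ≫ g.map u) (g.map v)
      rw [Category.assoc, ← g.map_comp] at h
      exact h.trans (congrArg (fun w : c ⟶ c' =>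
        (⟨_, _ ≫ (F.lift (eqToHom (F.lift_cod _) ≫ g.map w)).2⟩ : Σ a : A, x.1.1 ⟶ a))
        (Category.id_comp v).symm)
    · exact congrArg (Sigma.mk c') (congrArg (u ≫ ·) (Category.id_comp v).symm)

/-- The strict pullback square of two functors commutes. -/
theorem proj₁_comp_eq_proj₂_comp (f : A ⥤ B) (g : C ⥤ B) :
    (proj₁ : CatPullback f g ⥤ A) ⋙ f = proj₂ ⋙ g :=
  CategoryTheory.Functor.ext (fun x : CatPullback f g => x.2) fun x y m => by
    have h : f.map m.1.1 ≫ eqToHom y.2 = eqToHom x.2 ≫ g.map m.1.2 := m.2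
    change f.map m.1.1 = eqToHom x.2 ≫ g.map m.1.2 ≫ eqToHom y.2.symm
    rw [← Category.assoc, ← h]
    simp

/-- The two composite lenses out of the strict pullback agree. -/
theorem lens₁_comp_eq_lens₂_comp (F : Lens A B) (G : Lens C B) :
    (lens₁ F.func G).comp F = (lens₂ F G.func).comp G := by
  refine Lens.ext_of_lift_s18 (proj₁_comp_eq_proj₂_comp F.func G.func) fun x b u => ?_
  change G.func.obj x.1.2 ⟶ b at u
  refine sigma_hom_ext ?_ ?_
  · change F.lift (eqToHom x.2 ≫ u) = F.lift (eqToHom x.2 ≫ G.func.map (G.lift u).2)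
    rw [G.lift_map, ← Category.assoc, F.lift_comp_eqToHom_s18]
  · change G.lift (eqToHom x.2.symm ≫ F.func.map (F.lift (eqToHom x.2 ≫ u)).2) = G.lift u
    rw [F.lift_map, ← Category.assoc, G.lift_comp_eqToHom_s18, ← Category.assoc, eqToHom_trans,
      eqToHom_refl, Category.id_comp]

end CatPullback

/-- The strict pullback of the underlying functors of two lenses `F : A ⇌ B` and
`G : C ⇌ B` carries projection lens structures (with the canonical liftings
`((a, c), u) ↦ (u, γ(c, f u))` and `((a, c), v) ↦ (φ(a, g v), v)`), and the two
composite lenses to `B` agree. -/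
theorem imported_pullback_lens {A B C : Type u}
    [SmallCategory A] [SmallCategory B] [SmallCategory C]
    (F : Lens A B) (G : Lens C B) :
    ∃ (P₀ : Lens (CatPullback F.func G.func) A)
      (h₀ : P₀.func = CatPullback.proj₁)
      (P₁ : Lens (CatPullback F.func G.func) C)
      (h₁ : P₁.func = CatPullback.proj₂),
      (∀ (x : CatPullback F.func G.func) (a' : A) (u : x.1.1 ⟶ a'),
        P₀.lift (eqToHom (Functor.congr_obj h₀ x) ≫ u) =
          ⟨⟨(a', (G.lift (eqToHom x.2.symm ≫ F.func.map u)).1),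
              (G.lift_cod (eqToHom x.2.symm ≫ F.func.map u)).symm⟩,
            ⟨(u, (G.lift (eqToHom x.2.symm ≫ F.func.map u)).2),
              by rw [G.lift_map]; simp⟩⟩) ∧
      (∀ (x : CatPullback F.func G.func) (c' : C) (v : x.1.2 ⟶ c'),
        P₁.lift (eqToHom (Functor.congr_obj h₁ x) ≫ v) =
          ⟨⟨((F.lift (eqToHom x.2 ≫ G.func.map v)).1, c'),
              F.lift_cod (eqToHom x.2 ≫ G.func.map v)⟩,
            ⟨((F.lift (eqToHom x.2 ≫ G.func.map v)).2, v),
              by rw [F.lift_map]; simp⟩⟩) ∧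
      P₀.comp F = P₁.comp G := by
  refine ⟨CatPullback.lens₁ F.func G, rfl, CatPullback.lens₂ F G.func, rfl, fun x a' u => ?_,
    fun x c' v => ?_, CatPullback.lens₁_comp_eq_lens₂_comp F G⟩
  · exact congrArg (fun w : x.1.1 ⟶ a' => (CatPullback.lens₁ F.func G).lift (a := x) w)
      (Category.id_comp u)
  · exact congrArg (fun w : x.1.2 ⟶ c' => (CatPullback.lens₂ F G.func).lift (a := x) w)
      (Category.id_comp v)
end
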